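/- Let b > 0 and let l ≥ -1/2 be real. Define U₀(x,t) = C₀²·x^{l+1}·t^{l+1} with C₀ = Γ(1/2)Γ(l+1)/(2^{l+3/2}Γ(l+3/2)²), and for n ≥ 1 let U_{4n-1}(x,t) = Σ_{k even, 0 ≤ k ≤ 2n} C(2n,k) · [Γ(n+(1-k)/2)·Γ((k+1)/2)·Γ(l+1)² / (2^{2l+3}·Γ(l+3/2)²·Γ(n+l+(3-k)/2)·Γ(l+(k+3)/2))] · x^{2n-k+l+1}·t^{k+l+1}. Let g ∈ C¹([0,b], ℂ) satisfy g(0) = g'(0) = 0. Then for every ε > 0 there exist N ∈ ℕ and coefficients a₀, a₁, …, a_N ∈ ℂ such that for all x ∈ [0,b], |g'(x) - d/dx[a₀·U₀(x,x) + Σ_{κ=1}^N a_κ·U_{4κ-1}(x,x)]| ≤ ε. -/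

import Mathlib

/-- The generalized wave polynomial `U₀(x,t) = C₀² x^{l+1} t^{l+1}` with
`C₀ = Γ(1/2)Γ(l+1)/(2^{l+3/2}Γ(l+3/2)²)`. -/
noncomputable def genWaveU0 (l : ℝ) (x t : ℝ) : ℝ :=
  (Real.Gamma (1/2) * Real.Gamma (l + 1) / (2 ^ (l + 3/2) * Real.Gamma (l + 3/2) ^ 2)) ^ 2 *
    x ^ (l + 1) * t ^ (l + 1)

/-- The generalized wave polynomial `U_{4n-1}` (sum over even `k = 2j`, `0 ≤ j ≤ n`). -/
noncomputable def genWaveU4 (l : ℝ) (n : ℕ) (x t : ℝ) : ℝ :=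
  ∑ j ∈ Finset.range (n + 1),
    (Nat.choose (2 * n) (2 * j) : ℝ) *
      (Real.Gamma ((n : ℝ) + (1 - 2 * (j : ℝ)) / 2) * Real.Gamma ((2 * (j : ℝ) + 1) / 2) *
          Real.Gamma (l + 1) ^ 2 /
        (2 ^ (2 * l + 3) * Real.Gamma (l + 3/2) ^ 2 *
          Real.Gamma ((n : ℝ) + l + (3 - 2 * (j : ℝ)) / 2) *
          Real.Gamma (l + (2 * (j : ℝ) + 3) / 2))) *
      x ^ (2 * (n : ℝ) - 2 * (j : ℝ) + l + 1) * t ^ (2 * (j : ℝ) + l + 1)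

/-!
Both `U₀` and `U_{4n-1}` are positively homogeneous with positive coefficients, so their diagonal
traces are positive multiples of `y ^ (2n + 2l + 2)`, where `n = 0` stands for `U₀`. The derivatives
of linear combinations of the traces are therefore exactly the functions `y ^ (2l + 1) * p (y ^ 2)`
with `p` a polynomial. By Stone–Weierstrass, multiples of a weight by polynomials in an injective
real function are dense in the closed ideal generated by the weight, which consists of all
continuous functions vanishing where the weight does. For the weight `y ^ (2l + 1)` on `[0, b]` this
ideal contains every continuous function vanishing at `0`.
-/

open Polynomial Set

section WeightedApproximation

variable {𝕜 X : Type*} [RCLike 𝕜] [TopologicalSpace X] [CompactSpace X]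

theorem denseRange_aeval_of_isSelfAdjoint_of_injective {φ : C(X, 𝕜)} (hφ : IsSelfAdjoint φ)
    (hinj : Function.Injective φ) : DenseRange fun p : 𝕜[X] ↦ aeval φ p := by
  have hsep : (StarAlgebra.adjoin 𝕜 {φ}).SeparatesPoints := fun _ _ hxy ↦
    ⟨φ, mem_image_of_mem _ (StarAlgebra.self_mem_adjoin_singleton 𝕜 φ), hinj.ne hxy⟩
  have hrange : (StarAlgebra.adjoin 𝕜 {φ} : Set C(X, 𝕜)) = range fun p : 𝕜[X] ↦ aeval φ p := by
    rw [← StarSubalgebra.coe_toSubalgebra, StarAlgebra.adjoin_toSubalgebra, star_singleton,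
      hφ.star_eq, union_self, Algebra.adjoin_singleton_eq_range_aeval]
    rfl
  rw [DenseRange, ← hrange, dense_iff_closure_eq, ← StarSubalgebra.topologicalClosure_coe,
    ContinuousMap.starSubalgebra_topologicalClosure_eq_top_of_separatesPoints _ hsep,
    StarSubalgebra.coe_top]

variable [T2Space X]

theorem mem_closure_mul_image_of_dense {A : Set C(X, 𝕜)} (hA : Dense A) {w f : C(X, 𝕜)}
    (hf : ∀ x, w x = 0 → f x = 0) : f ∈ closure ((w * ·) '' A) := by
  have hf_mem : f ∈ (Ideal.span {w}).closure := by
    rw [← ContinuousMap.idealOfSet_ofIdeal_eq_closure, ContinuousMap.mem_idealOfSet]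
    exact fun x hx ↦
      hf x (ContinuousMap.notMem_setOfIdeal.1 hx (Ideal.mem_span_singleton_self w))
  have hspan : (Ideal.span {w} : Set C(X, 𝕜)) ⊆ closure ((w * ·) '' A) := by
    rintro _ hg
    obtain ⟨h, rfl⟩ := Ideal.mem_span_singleton'.1 hg
    exact (continuous_const_mul w).range_subset_closure_image_dense hA ⟨h, mul_comm w h⟩
  exact closure_minimal hspan isClosed_closure hf_mem

theorem exists_polynomial_norm_sub_mul_aeval_lt {w φ f : C(X, 𝕜)} (hφ : IsSelfAdjoint φ)
    (hinj : Function.Injective φ) (hf : ∀ x, w x = 0 → f x = 0) {ε : ℝ} (hε : 0 < ε) :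
    ∃ p : 𝕜[X], ‖f - w * aeval φ p‖ < ε := by
  have hmem :=
    mem_closure_mul_image_of_dense (denseRange_aeval_of_isSelfAdjoint_of_injective hφ hinj) hf
  obtain ⟨_, ⟨_, ⟨p, rfl⟩, rfl⟩, hp⟩ := Metric.mem_closure_iff.1 hmem ε hε
  exact ⟨p, by rwa [← dist_eq_norm]⟩

end WeightedApproximation

theorem exists_polynomial_norm_sub_rpow_mul_eval_pow_lt {𝕜 : Type*} [RCLike 𝕜] {s : Set ℝ}
    (hs : IsCompact s) (hs₀ : s ⊆ Ici 0) {α : ℝ} (hα : 0 ≤ α) {m : ℕ} (hm : m ≠ 0) {f : ℝ → 𝕜}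
    (hf : ContinuousOn f s) (hf₀ : f 0 = 0) {ε : ℝ} (hε : 0 < ε) :
    ∃ p : 𝕜[X], ∀ x ∈ s, ‖f x - (x ^ α : ℝ) * p.eval ((x : 𝕜) ^ m)‖ < ε := by
  have : CompactSpace s := isCompact_iff_compactSpace.1 hs
  let w : C(s, 𝕜) := ⟨fun x ↦ ((x ^ α : ℝ) : 𝕜),
    RCLike.continuous_ofReal.comp (continuous_subtype_val.rpow_const fun _ ↦ .inr hα)⟩
  let φ : C(s, 𝕜) := ⟨fun x ↦ (x : 𝕜) ^ m, by fun_prop⟩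
  have hφ : IsSelfAdjoint φ := by
    ext x
    simp [φ]
  have hinj : Function.Injective φ := fun x y hxy ↦ by
    have hpow : (x : ℝ) ^ m = (y : ℝ) ^ m := by
      exact_mod_cast show ((x : ℝ) : 𝕜) ^ m = ((y : ℝ) : 𝕜) ^ m from hxy
    exact Subtype.ext ((pow_left_inj₀ (hs₀ x.2) (hs₀ y.2) hm).1 hpow)
  have hvanish : ∀ x : s, w x = 0 → f x = 0 := fun x hx ↦ by
    have hx₀ : (x : ℝ) = 0 :=
      ((Real.rpow_eq_zero_iff_of_nonneg (hs₀ x.2)).1 (RCLike.ofReal_eq_zero.1 hx)).1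
    rw [hx₀, hf₀]
  obtain ⟨p, hp⟩ := exists_polynomial_norm_sub_mul_aeval_lt (f := ⟨_, hf.domRestrict⟩)
    hφ hinj hvanish hε
  refine ⟨p, fun x hx ↦ ?_⟩
  simpa [w, φ, aeval_continuousMap_apply] using
    (ContinuousMap.norm_coe_le_norm _ ⟨x, hx⟩).trans_lt hp

section Homogeneity

variable {l r x t : ℝ}

theorem mul_rpow_mul_mul_rpow {a b : ℝ} (hr : 0 ≤ r) (hx : 0 ≤ x) (ht : 0 ≤ t) (ha : 0 ≤ a)
    (hb : 0 ≤ b) : (r * x) ^ a * (r * t) ^ b = r ^ (a + b) * (x ^ a * t ^ b) := by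
  rw [Real.mul_rpow hr hx, Real.mul_rpow hr ht, Real.rpow_add_of_nonneg hr ha hb]
  ring

theorem genWaveU0_mul_mul (hl : -1 ≤ l) (hr : 0 ≤ r) (hx : 0 ≤ x) (ht : 0 ≤ t) :
    genWaveU0 l (r * x) (r * t) = r ^ (2 * l + 2) * genWaveU0 l x t := by
  have hl₁ : 0 ≤ l + 1 := by linarith
  rw [genWaveU0, genWaveU0, mul_assoc, mul_rpow_mul_mul_rpow hr hx ht hl₁ hl₁,
    show l + 1 + (l + 1) = 2 * l + 2 by ring]
  ring

theorem genWaveU4_mul_mul (hl : -1 ≤ l) (n : ℕ) (hr : 0 ≤ r) (hx : 0 ≤ x) (ht : 0 ≤ t) :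
    genWaveU4 l n (r * x) (r * t) = r ^ (2 * n + 2 * l + 2) * genWaveU4 l n x t := by
  rw [genWaveU4, genWaveU4, Finset.mul_sum]
  refine Finset.sum_congr rfl fun j hj ↦ ?_
  have hjn : (j : ℝ) ≤ n := by exact_mod_cast Finset.mem_range_succ_iff.1 hj
  have hx_exp : 0 ≤ 2 * (n : ℝ) - 2 * j + l + 1 := by linarith
  have ht_exp : 0 ≤ 2 * (j : ℝ) + l + 1 := by linarith
  rw [mul_assoc, mul_rpow_mul_mul_rpow hr hx ht hx_exp ht_exp,
    show 2 * (n : ℝ) - 2 * j + l + 1 + (2 * j + l + 1) = 2 * n + 2 * l + 2 by ring]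
  ring

theorem genWaveU0_pos (hl : -1 < l) (hx : 0 < x) (ht : 0 < t) : 0 < genWaveU0 l x t := by
  have hΓ₁ : 0 < Real.Gamma (l + 1) := Real.Gamma_pos_of_pos (by linarith)
  have hΓ₂ : 0 < Real.Gamma (l + 3 / 2) := Real.Gamma_pos_of_pos (by linarith)
  unfold genWaveU0
  positivity

theorem genWaveU4_pos (hl : -1 < l) (n : ℕ) (hx : 0 < x) (ht : 0 < t) :
    0 < genWaveU4 l n x t := by
  refine Finset.sum_pos (fun j hj ↦ ?_) Finset.nonempty_range_add_one
  have hjn : j ≤ n := Finset.mem_range_succ_iff.1 hj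
  have hjn' : (j : ℝ) ≤ n := by exact_mod_cast hjn
  have hchoose : 0 < (2 * n).choose (2 * j) := Nat.choose_pos (by lia)
  have hΓ₁ : 0 < Real.Gamma (n + (1 - 2 * (j : ℝ)) / 2) := Real.Gamma_pos_of_pos (by linarith)
  have hΓ₂ : 0 < Real.Gamma (l + 1) := Real.Gamma_pos_of_pos (by linarith)
  have hΓ₃ : 0 < Real.Gamma (l + 3 / 2) := Real.Gamma_pos_of_pos (by linarith)
  have hΓ₄ : 0 < Real.Gamma (n + l + (3 - 2 * (j : ℝ)) / 2) := Real.Gamma_pos_of_pos (by linarith)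
  have hΓ₅ : 0 < Real.Gamma (l + (2 * (j : ℝ) + 3) / 2) := Real.Gamma_pos_of_pos (by linarith)
  positivity

end Homogeneity

/-- The diagonal traces of `U₀, U₃, U₇, …` as a single sequence: index `0` is `U₀` and index
`n ≥ 1` is `U_{4n-1}`. -/
noncomputable def genWaveDiag (l : ℝ) : ℕ → ℝ → ℝ
  | 0, y => genWaveU0 l y y
  | n + 1, y => genWaveU4 l (n + 1) y y

section Diagonal

variable {l : ℝ}

theorem genWaveDiag_eq_mul_rpow (hl : -1 ≤ l) (n : ℕ) {y : ℝ} (hy : 0 ≤ y) :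
    genWaveDiag l n y = genWaveDiag l n 1 * y ^ (2 * n + 2 * l + 2) := by
  cases n with
  | zero =>
    simpa [genWaveDiag, mul_comm] using genWaveU0_mul_mul hl hy zero_le_one zero_le_one
  | succ n =>
    simpa [genWaveDiag, mul_comm] using genWaveU4_mul_mul hl (n + 1) hy zero_le_one zero_le_one

theorem genWaveDiag_pos (hl : -1 < l) (n : ℕ) {y : ℝ} (hy : 0 < y) : 0 < genWaveDiag l n y := by
  cases n with
  | zero => exact genWaveU0_pos hl hy hy
  | succ n => exact genWaveU4_pos hl (n + 1) hy hy

theorem sum_range_succ_mul_genWaveDiag (a : ℕ → ℂ) (N : ℕ) (y : ℝ) :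
    ∑ n ∈ Finset.range (N + 1), a n * (genWaveDiag l n y : ℂ) =
      a 0 * (genWaveU0 l y y : ℂ) + ∑ κ ∈ Finset.Icc 1 N, a κ * (genWaveU4 l κ y y : ℂ) := by
  rw [Finset.sum_range_eq_add_Ico _ N.add_one_pos, Finset.Ico_add_one_right_eq_Icc]
  congr 1
  refine Finset.sum_congr rfl fun κ hκ ↦ ?_
  obtain ⟨n, rfl⟩ := Nat.exists_eq_add_of_le' (Finset.mem_Icc.1 hκ).1
  rfl

theorem hasDerivWithinAt_genWaveDiag (hl : -(1 / 2) ≤ l) (n : ℕ) {x : ℝ} (hx : 0 ≤ x) :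
    HasDerivWithinAt (genWaveDiag l n)
      (genWaveDiag l n 1 * (2 * n + 2 * l + 2) * (x ^ (2 * l + 1) * (x ^ 2) ^ n)) (Ici 0) x := by
  have hpow : x ^ (2 * n + 2 * l + 2 - 1) = x ^ (2 * l + 1) * (x ^ 2) ^ n := by
    rw [← pow_mul, ← Real.rpow_natCast, ← Real.rpow_add_of_nonneg hx (by linarith) (by positivity)]
    push_cast
    ring_nf
  have hderiv := ((Real.hasDerivAt_rpow_const (x := x) (p := 2 * n + 2 * l + 2)
    (.inr (by linarith))).const_mul (genWaveDiag l n 1)).hasDerivWithinAt (s := Ici 0)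
  rw [hpow, ← mul_assoc] at hderiv
  exact hderiv.congr_of_mem (fun y hy ↦ genWaveDiag_eq_mul_rpow (by linarith) n hy) hx

theorem exists_hasDerivWithinAt_sum_genWaveDiag (hl : -(1 / 2) ≤ l) (p : ℂ[X]) :
    ∃ a : ℕ → ℂ, ∀ x : ℝ, 0 ≤ x →
      HasDerivWithinAt
        (fun y ↦ ∑ n ∈ Finset.range (p.natDegree + 1), a n * (genWaveDiag l n y : ℂ))
        ((x ^ (2 * l + 1) : ℝ) * p.eval ((x : ℂ) ^ 2)) (Ici 0) x := by
  let c : ℕ → ℝ := fun n ↦ genWaveDiag l n 1 * (2 * n + 2 * l + 2)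
  have hc : ∀ n, (c n : ℂ) ≠ 0 := fun n ↦ by
    have hexp : 0 < 2 * (n : ℝ) + 2 * l + 2 := by linarith
    exact Complex.ofReal_ne_zero.2 (mul_pos (genWaveDiag_pos (by linarith) n one_pos) hexp).ne'
  refine ⟨fun n ↦ p.coeff n / c n, fun x hx ↦ ?_⟩
  have hsum := HasDerivWithinAt.fun_sum fun n (_ : n ∈ Finset.range (p.natDegree + 1)) ↦
    (hasDerivWithinAt_genWaveDiag hl n hx).ofReal_comp.const_mul (p.coeff n / c n)
  refine hsum.congr_deriv ?_
  rw [eval_eq_sum_range, Finset.mul_sum]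
  refine Finset.sum_congr rfl fun n _ ↦ ?_
  rw [Complex.ofReal_mul (c n), ← mul_assoc, div_mul_cancel₀ _ (hc n)]
  push_cast
  ring

end Diagonal

/-- Any `g ∈ C¹([0,b],ℂ)` with `g(0) = g'(0) = 0` admits, for each
`ε > 0`, an approximation of `g'` uniform on `[0,b]` by the derivative of the diagonal
trace of a linear combination `a₀U₀ + Σ_{κ=1}^N a_κ U_{4κ-1}`. -/
theorem stmt_14 (b l : ℝ) (hb : 0 < b) (hl : -(1/2) ≤ l)
    (g g' : ℝ → ℂ)
    (hg1 : ∀ x ∈ Set.Icc (0:ℝ) b, HasDerivWithinAt g (g' x) (Set.Icc 0 b) x)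
    (hg'c : ContinuousOn g' (Set.Icc 0 b))
    (hg0 : g 0 = 0) (hg'0 : g' 0 = 0) :
    ∀ ε : ℝ, 0 < ε → ∃ (N : ℕ) (a : ℕ → ℂ),
      ∀ x ∈ Set.Icc (0:ℝ) b,
        ‖g' x - derivWithin (fun y : ℝ =>
            a 0 * (genWaveU0 l y y : ℂ) +
              ∑ κ ∈ Finset.Icc 1 N, a κ * (genWaveU4 l κ y y : ℂ))
          (Set.Icc 0 b) x‖ ≤ ε := by
  intro ε hε
  obtain ⟨p, hp⟩ := exists_polynomial_norm_sub_rpow_mul_eval_pow_lt isCompact_Icc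
    (fun _ hx ↦ hx.1) (show 0 ≤ 2 * l + 1 by linarith) two_ne_zero hg'c hg'0 hε
  obtain ⟨a, ha⟩ := exists_hasDerivWithinAt_sum_genWaveDiag hl p
  refine ⟨p.natDegree, a, fun x hx ↦ ?_⟩
  simp_rw [← sum_range_succ_mul_genWaveDiag]
  rw [((ha x hx.1).mono Icc_subset_Ici_self).derivWithin (uniqueDiffOn_Icc hb x hx)]
  exact (hp x hx).le
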